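/- Let θ > 0, t > 0 and f ∈ 𝒮. Then the function (P_t f)'·1_{(0,∞)} belongs to 𝒮; that is: (P_t f)' is C² on (0,∞), the one-sided limits at 0⁺ of (P_t f)', (P_t f)'' and (P_t f)''' exist and are finite, and lim_{x→∞} (P_t f)'(x) = 0. -/

import Mathlib

open MeasureTheory Real Filter Set

/-- Complementary error function `erfc(x) = (2/√π)·∫_x^∞ e^{−y²} dy`. -/
noncomputable def erfc (x : ℝ) : ℝ :=
  (2 / Real.sqrt Real.pi) * ∫ y in Set.Ioi x, Real.exp (-y ^ 2)

/-- `g_t(x) = θ·exp(2θx + 2θ²t)·erfc(x/√(2t) + θ·√(2t))`. -/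
noncomputable def gfun (θ t x : ℝ) : ℝ :=
  θ * Real.exp (2 * θ * x + 2 * θ ^ 2 * t) *
    erfc (x / Real.sqrt (2 * t) + θ * Real.sqrt (2 * t))

/-- The Gaussian kernel `p_t(x,y) = (2πt)^{−1/2}·exp(−(y−x)²/(2t))`. -/
noncomputable def pker (t x y : ℝ) : ℝ :=
  (Real.sqrt (2 * Real.pi * t))⁻¹ * Real.exp (-(y - x) ^ 2 / (2 * t))

/-- The sticky Brownian motion semigroup:
`P_t f(x) = ∫_0^∞ (p_t(x,y) − p_t(x,−y) + 2 g_t(x+y)) f(y) dy + (1/θ) g_t(x) f(0)`. -/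
noncomputable def Pt (θ t : ℝ) (f : ℝ → ℝ) (x : ℝ) : ℝ :=
  (∫ y in Set.Ioi (0:ℝ), (pker t x y - pker t x (-y) + 2 * gfun θ t (x + y)) * f y)
    + (1 / θ) * gfun θ t x * f 0

/-- `f ∈ 𝒮`: `f` is C² on `(0,∞)`, the one-sided limits `f(0⁺)`, `f'(0⁺)`, `f''(0⁺)` exist
and are finite, and `lim_{x→∞} f(x) = 0`. -/
def memS (f : ℝ → ℝ) : Prop :=
  ContDiffOn ℝ 2 f (Set.Ioi 0) ∧
  (∃ a : ℝ, Filter.Tendsto f (nhdsWithin 0 (Set.Ioi 0)) (nhds a)) ∧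
  (∃ b : ℝ, Filter.Tendsto (deriv f) (nhdsWithin 0 (Set.Ioi 0)) (nhds b)) ∧
  (∃ c : ℝ, Filter.Tendsto (deriv (deriv f)) (nhdsWithin 0 (Set.Ioi 0)) (nhds c)) ∧
  Filter.Tendsto f Filter.atTop (nhds 0)


open Topology

lemma integrable_exp_neg_abs' {c : ℝ} (hc : 0 < c) :
    Integrable (fun u : ℝ => Real.exp (-c * |u|)) := by
  have h1 : IntegrableOn (fun u : ℝ => Real.exp (-c * |u|)) (Ioi 0) := by
    refine (exp_neg_integrableOn_Ioi 0 hc).congr_fun ?_ measurableSet_Ioi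
    intro x hx
    simp only [abs_of_pos (show (0:ℝ) < x from hx)]
  have h2 : IntegrableOn (fun u : ℝ => Real.exp (-c * |u|)) (Iic 0) := by
    refine (integrableOn_exp_mul_Iic hc 0).congr_fun ?_ measurableSet_Iic
    intro x hx
    simp only [abs_of_nonpos (show x ≤ 0 from hx)]
    ring_nf
  rw [← integrableOn_univ, ← Iic_union_Ioi (a := (0:ℝ))]
  exact h2.union h1

lemma conv_bound {c C M : ℝ} (hc : 0 < c) (hC : 0 ≤ C) {K H : ℝ → ℝ}
    (bK : ∀ u, |K u| ≤ C * Real.exp (-c * |u|)) (bH : ∀ z, |H z| ≤ M) (x x₀ z : ℝ)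
    (hx : |x - x₀| ≤ 1) :
    ‖K (x - z) * H z‖ ≤ C * Real.exp c * M * Real.exp (-c * |x₀ - z|) := by
  rw [Real.norm_eq_abs, abs_mul]
  have h1 : |x₀ - z| ≤ |x - z| + 1 := by
    have := abs_sub_abs_le_abs_sub (x₀ - z) (x - z)
    have h2 : x₀ - z - (x - z) = -(x - x₀) := by ring
    rw [h2, abs_neg] at this
    linarith
  have h3 : Real.exp (-c * |x - z|) ≤ Real.exp c * Real.exp (-c * |x₀ - z|) := by
    rw [← Real.exp_add]
    apply Real.exp_le_exp.2
    nlinarith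
  have hM : 0 ≤ M := (abs_nonneg _).trans (bH 0)
  calc |K (x - z)| * |H z| ≤ (C * (Real.exp c * Real.exp (-c * |x₀ - z|))) * M := by
        apply mul_le_mul _ (bH z) (abs_nonneg _) (by positivity)
        exact (bK _).trans (mul_le_mul_of_nonneg_left h3 hC)
    _ = _ := by ring

lemma conv_deriv {c C C' M : ℝ} (hc : 0 < c) {K K' H : ℝ → ℝ}
    (hK : ∀ u, HasDerivAt K (K' u) u) (cK' : Continuous K')
    (bK : ∀ u, |K u| ≤ C * Real.exp (-c * |u|))
    (bK' : ∀ u, |K' u| ≤ C' * Real.exp (-c * |u|))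
    (mH : Measurable H) (bH : ∀ z, |H z| ≤ M) (x₀ : ℝ) :
    Integrable (fun z => K (x₀ - z) * H z) ∧
    HasDerivAt (fun x => ∫ z, K (x - z) * H z) (∫ z, K' (x₀ - z) * H z) x₀ := by
  have cK : Continuous K := continuous_iff_continuousAt.2 fun u => (hK u).continuousAt
  have hC : 0 ≤ C := by have := (abs_nonneg _).trans (bK 0); simpa using this
  have hC' : 0 ≤ C' := by have := (abs_nonneg _).trans (bK' 0); simpa using this
  have hint : ∀ D : ℝ, Integrable (fun z => D * Real.exp (-c * |x₀ - z|)) := fun D =>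
    ((integrable_exp_neg_abs' hc).comp_sub_left x₀).const_mul D
  have m1 : ∀ x, AEStronglyMeasurable (fun z => K (x - z) * H z) volume := fun x =>
    (((cK.measurable.comp (measurable_const.sub measurable_id)).mul mH)).aestronglyMeasurable
  have m2 : ∀ x, AEStronglyMeasurable (fun z => K' (x - z) * H z) volume := fun x =>
    (((cK'.measurable.comp (measurable_const.sub measurable_id)).mul mH)).aestronglyMeasurable
  have i1 : Integrable (fun z => K (x₀ - z) * H z) :=
    (hint (C * Real.exp c * M)).mono' (m1 x₀)
      (Eventually.of_forall fun z => conv_bound hc hC bK bH x₀ x₀ z (by simp))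
  refine ⟨i1, (hasDerivAt_integral_of_dominated_loc_of_deriv_le (F := fun x z => K (x - z) * H z)
    (F' := fun x z => K' (x - z) * H z)
    (Metric.ball_mem_nhds x₀ one_pos) (Eventually.of_forall m1) i1 (m2 x₀)
    (Eventually.of_forall fun z x hx => conv_bound hc hC' bK' bH x x₀ z ?_)
    (hint _) (Eventually.of_forall fun z x hx => ?_)).2⟩
  · rw [← Real.dist_eq]; exact (Metric.mem_ball.1 hx).le
  · exact ((hK (x - z)).comp_sub_const x z).mul_const _

lemma conv_tendsto {c C M : ℝ} (hc : 0 < c) {K H : ℝ → ℝ}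
    (cK : Continuous K)
    (bK : ∀ u, |K u| ≤ C * Real.exp (-c * |u|))
    (mH : Measurable H) (bH : ∀ z, |H z| ≤ M) (tH : Tendsto H atTop (𝓝 0)) :
    Tendsto (fun x => ∫ z, K (x - z) * H z) atTop (𝓝 0) := by
  have e : ∀ x, ∫ z, K (x - z) * H z = ∫ u, K u * H (x - u) := fun x => by
    rw [← integral_sub_left_eq_self _ volume x]
    simp
  simp_rw [e]
  have hC : 0 ≤ C := by have := (abs_nonneg _).trans (bK 0); simpa using this
  have := tendsto_integral_filter_of_dominated_convergence (μ := volume) (l := atTop)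
    (F := fun x u => K u * H (x - u)) (f := fun _ => (0:ℝ))
    (fun u => C * Real.exp (-c * |u|) * M) ?_ ?_ ?_ ?_
  · simpa using this
  · exact Eventually.of_forall fun x =>
      (cK.measurable.mul (mH.comp (measurable_const.sub measurable_id))).aestronglyMeasurable
  · refine Eventually.of_forall fun x => Eventually.of_forall fun u => ?_
    rw [Real.norm_eq_abs, abs_mul]
    exact mul_le_mul (bK u) (bH _) (abs_nonneg _) (by positivity)
  · exact ((integrable_exp_neg_abs' hc).const_mul C).mul_const M
  · refine Eventually.of_forall fun u => ?_
    have : Tendsto (fun x => H (x - u)) atTop (𝓝 0) :=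
      tH.comp (tendsto_atTop_add_const_right _ (-u) tendsto_id)
    simpa using this.const_mul (K u)

def Chain (c : ℝ) (K : ℕ → ℝ → ℝ) : Prop :=
  (∀ n u, HasDerivAt (K n) (K (n + 1) u) u) ∧
    ∀ n, ∃ C, ∀ u, |K n u| ≤ C * Real.exp (-c * |u|)

lemma Chain.cont {c : ℝ} {K : ℕ → ℝ → ℝ} (h : Chain c K) (n : ℕ) : Continuous (K n) :=
  continuous_iff_continuousAt.2 fun u => (h.1 n u).continuousAt

lemma integrable_gauss : Integrable (fun y : ℝ => Real.exp (-y ^ 2)) := by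
  simpa using integrable_exp_neg_mul_sq (b := 1) one_pos

lemma erfc_hasDeriv (x : ℝ) :
    HasDerivAt erfc (-(2 / Real.sqrt Real.pi) * Real.exp (-x ^ 2)) x := by
  have e : erfc = fun x => (2 / Real.sqrt Real.pi) *
      ((∫ y in Ioi (0:ℝ), Real.exp (-y ^ 2)) - ∫ y in (0:ℝ)..x, Real.exp (-y ^ 2)) := by
    funext x
    rw [← intervalIntegral.integral_Ioi_sub_Ioi' integrable_gauss.integrableOn
      integrable_gauss.integrableOn, erfc]
    ring
  have hc : Continuous fun y : ℝ => Real.exp (-y ^ 2) := by fun_prop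
  rw [e]
  have := (((hc.integral_hasStrictDerivAt 0 x).hasDerivAt).const_sub
    (∫ y in Ioi (0:ℝ), Real.exp (-y ^ 2))).const_mul (2 / Real.sqrt Real.pi)
  exact this.congr_deriv (by ring)

lemma erfc_nonneg (x : ℝ) : 0 ≤ erfc x := by
  unfold erfc
  have : 0 ≤ ∫ y in Set.Ioi x, Real.exp (-y ^ 2) := by positivity
  positivity

lemma erfc_le (x : ℝ) : erfc x ≤ 2 := by
  unfold erfc
  have h1 : ∫ y in Set.Ioi x, Real.exp (-y ^ 2) ≤ ∫ y, Real.exp (-y ^ 2) :=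
    setIntegral_le_integral integrable_gauss (Eventually.of_forall fun y => (Real.exp_pos _).le)
  have h2 : ∫ y : ℝ, Real.exp (-y ^ 2) = Real.sqrt Real.pi := by
    simpa using integral_gaussian 1
  rw [h2] at h1
  have : 0 < Real.sqrt Real.pi := by positivity
  calc _ ≤ 2 / Real.sqrt Real.pi * Real.sqrt Real.pi := by gcongr
    _ = 2 := by field_simp

lemma erfc_le_gauss (x : ℝ) (hx : 0 ≤ x) : erfc x ≤ 2 * Real.exp (-x ^ 2) := by
  have h0 : ∫ y in Set.Ioi x, Real.exp (-y ^ 2) ≤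
      Real.exp (-x ^ 2) * ∫ y in Set.Ioi 0, Real.exp (-y ^ 2) := by
    have e : ∫ y in Set.Ioi x, Real.exp (-y ^ 2) =
        ∫ y in Set.Ioi 0, Real.exp (-(y + x) ^ 2) := by
      have := (measurePreserving_add_right volume x).setIntegral_preimage_emb
        (measurableEmbedding_addRight x) (fun y : ℝ => Real.exp (-y ^ 2)) (Ioi x)
      rw [← this]
      simp
    rw [e, ← integral_const_mul]
    refine setIntegral_mono_on (integrable_gauss.comp_add_right x).integrableOn
      (integrable_gauss.const_mul _).integrableOn measurableSet_Ioi fun y hy => ?_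
    rw [← Real.exp_add]
    apply Real.exp_le_exp.2
    have := mul_nonneg hx (le_of_lt (show (0:ℝ) < y from hy))
    nlinarith
  have h1 := erfc_le 0
  unfold erfc at h1 ⊢
  have : 0 ≤ 2 / Real.sqrt Real.pi := by positivity
  calc _ ≤ 2 / Real.sqrt Real.pi *
        (Real.exp (-x ^ 2) * ∫ y in Set.Ioi 0, Real.exp (-y ^ 2)) := by gcongr
    _ = (2 / Real.sqrt Real.pi * ∫ y in Set.Ioi 0, Real.exp (-y ^ 2)) * Real.exp (-x ^ 2) := by
        ring
    _ ≤ _ := by gcongr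

lemma gauss_exp_bound {t : ℝ} (ht : 0 < t) (b u : ℝ) :
    Real.exp (-u ^ 2 / (2 * t)) ≤ Real.exp (b ^ 2 * t / 2) * Real.exp (-b * |u|) := by
  rw [← Real.exp_add]
  apply Real.exp_le_exp.2
  have h : b ^ 2 * t / 2 + -b * |u| - -u ^ 2 / (2 * t) = (|u| - b * t) ^ 2 / (2 * t) := by
    rw [← sq_abs u]
    field_simp
    ring
  have : 0 ≤ (|u| - b * t) ^ 2 / (2 * t) := by positivity
  linarith

lemma poly_bound (P : Polynomial ℝ) : ∃ C, ∀ u : ℝ, |P.eval u| ≤ C * Real.exp |u| := by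
  induction P using Polynomial.induction_on' with
  | add p q hp hq =>
    obtain ⟨C, hC⟩ := hp
    obtain ⟨D, hD⟩ := hq
    refine ⟨C + D, fun u => ?_⟩
    rw [Polynomial.eval_add, add_mul]
    exact (abs_add_le _ _).trans (add_le_add (hC u) (hD u))
  | monomial n a =>
    refine ⟨|a| * n.factorial, fun u => ?_⟩
    have h := Real.pow_div_factorial_le_exp _ (abs_nonneg u) n
    have hn : (0:ℝ) < n.factorial := by exact_mod_cast n.factorial_pos
    rw [div_le_iff₀ hn] at h
    rw [Polynomial.eval_monomial, abs_mul, abs_pow, mul_assoc]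
    refine mul_le_mul_of_nonneg_left (by linarith) (abs_nonneg a)

lemma poly_gauss_bound {t : ℝ} (ht : 0 < t) (c : ℝ) (P : Polynomial ℝ) :
    ∃ C, ∀ u : ℝ, |P.eval u * Real.exp (-u ^ 2 / (2 * t))| ≤ C * Real.exp (-c * |u|) := by
  obtain ⟨C, hC⟩ := poly_bound P
  have hC0 : 0 ≤ C := by have := (abs_nonneg _).trans (hC 0); simpa using this
  refine ⟨C * Real.exp ((c + 1) ^ 2 * t / 2), fun u => ?_⟩
  rw [abs_mul, abs_of_pos (Real.exp_pos _)]
  calc _ ≤ (C * Real.exp |u|) *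
        (Real.exp ((c + 1) ^ 2 * t / 2) * Real.exp (-(c + 1) * |u|)) :=
        mul_le_mul (hC u) (gauss_exp_bound ht (c + 1) u) (Real.exp_pos _).le (by positivity)
    _ = C * Real.exp ((c + 1) ^ 2 * t / 2) * (Real.exp |u| * Real.exp (-(c + 1) * |u|)) := by ring
    _ = _ := by
      rw [← Real.exp_add]
      congr 2
      ring

lemma gexp_id {θ t : ℝ} (ht : 0 < t) (u : ℝ) :
    Real.exp (2 * θ * u + 2 * θ ^ 2 * t) *
      Real.exp (-(u / Real.sqrt (2 * t) + θ * Real.sqrt (2 * t)) ^ 2) =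
    Real.exp (-u ^ 2 / (2 * t)) := by
  rw [← Real.exp_add]
  congr 1
  have hs : Real.sqrt (2 * t) ^ 2 = 2 * t := Real.sq_sqrt (by positivity)
  have hp : 0 < Real.sqrt (2 * t) := Real.sqrt_pos.2 (by positivity)
  have e : (u / Real.sqrt (2 * t) + θ * Real.sqrt (2 * t)) ^ 2 =
      u ^ 2 / (Real.sqrt (2 * t)) ^ 2 + 2 * θ * u + θ ^ 2 * (Real.sqrt (2 * t)) ^ 2 := by
    field_simp
    ring
  rw [e, hs]
  ring

lemma gfun_bound {θ t : ℝ} (hθ : 0 < θ) (ht : 0 < t) :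
    ∃ C, ∀ u : ℝ, |gfun θ t u| ≤ C * Real.exp (-(2 * θ) * |u|) := by
  refine ⟨2 * θ * Real.exp (2 * θ ^ 2 * t), fun u => ?_⟩
  have hnn : 0 ≤ gfun θ t u := by
    unfold gfun
    exact mul_nonneg (by positivity) (erfc_nonneg _)
  rw [abs_of_nonneg hnn]
  unfold gfun
  rcases le_total u 0 with hu | hu
  · rw [abs_of_nonpos hu]
    calc _ ≤ θ * Real.exp (2 * θ * u + 2 * θ ^ 2 * t) * 2 := by
          gcongr
          exact erfc_le _
      _ = _ := by
        rw [Real.exp_add]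
        ring_nf
  · have h1 := erfc_le_gauss (u / Real.sqrt (2 * t) + θ * Real.sqrt (2 * t)) (by positivity)
    calc _ ≤ θ * Real.exp (2 * θ * u + 2 * θ ^ 2 * t) *
          (2 * Real.exp (-(u / Real.sqrt (2 * t) + θ * Real.sqrt (2 * t)) ^ 2)) := by
          gcongr
      _ = 2 * θ * Real.exp (-u ^ 2 / (2 * t)) := by
        rw [← gexp_id (θ := θ) ht u]; ring
      _ ≤ 2 * θ * (Real.exp ((2 * θ) ^ 2 * t / 2) * Real.exp (-(2 * θ) * |u|)) := by
        gcongr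
        exact gauss_exp_bound ht _ u
      _ = _ := by
        rw [show (2 * θ) ^ 2 * t / 2 = 2 * θ ^ 2 * t by ring]
        ring

lemma gfun_hasDeriv {θ t : ℝ} (ht : 0 < t) (u : ℝ) :
    HasDerivAt (gfun θ t) (2 * θ * gfun θ t u -
      θ * (2 / Real.sqrt Real.pi) / Real.sqrt (2 * t) * Real.exp (-u ^ 2 / (2 * t))) u := by
  have h1 : HasDerivAt (fun u : ℝ => u / Real.sqrt (2 * t) + θ * Real.sqrt (2 * t))
      (1 / Real.sqrt (2 * t)) u := ((hasDerivAt_id u).div_const _).add_const _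
  have h2 := (erfc_hasDeriv (u / Real.sqrt (2 * t) + θ * Real.sqrt (2 * t))).comp u h1
  have h3 : HasDerivAt (fun u : ℝ => 2 * θ * u + 2 * θ ^ 2 * t) (2 * θ) u := by
    simpa using ((hasDerivAt_id u).const_mul (2 * θ)).add_const (2 * θ ^ 2 * t)
  have h4 := (h3.exp.const_mul θ).mul h2
  refine HasDerivAt.congr_deriv (f := gfun θ t) h4 ?_
  rw [← gexp_id (θ := θ) ht u]
  simp only [gfun, Function.comp]
  ring

noncomputable def kstep (θ t : ℝ) (q : ℝ × Polynomial ℝ) : ℝ × Polynomial ℝ :=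
  (2 * θ * q.1, Polynomial.derivative q.2 - Polynomial.C (1 / t) * Polynomial.X * q.2 -
    Polynomial.C (θ * (2 / Real.sqrt Real.pi) / Real.sqrt (2 * t) * q.1))

noncomputable def kfun (θ t : ℝ) (q : ℝ × Polynomial ℝ) (u : ℝ) : ℝ :=
  q.1 * gfun θ t u + q.2.eval u * Real.exp (-u ^ 2 / (2 * t))

lemma kfun_hasDeriv {θ t : ℝ} (ht : 0 < t) (q : ℝ × Polynomial ℝ) (u : ℝ) :
    HasDerivAt (kfun θ t q) (kfun θ t (kstep θ t q) u) u := by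
  have h1 : HasDerivAt (fun u : ℝ => -u ^ 2 / (2 * t)) (-(2 * u) / (2 * t)) u := by
    simpa using ((hasDerivAt_pow 2 u).neg).div_const (2 * t)
  have h2 := ((gfun_hasDeriv (θ := θ) ht u).const_mul q.1).add
    ((q.2.hasDerivAt u).mul h1.exp)
  refine HasDerivAt.congr_deriv (f := kfun θ t q) h2 ?_
  simp only [kfun, kstep, Polynomial.eval_sub, Polynomial.eval_mul, Polynomial.eval_C,
    Polynomial.eval_X]
  field_simp
  ring

noncomputable def kchain (θ t : ℝ) (q : ℝ × Polynomial ℝ) (n : ℕ) : ℝ → ℝ :=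
  kfun θ t ((kstep θ t)^[n] q)

lemma kchain_chain {θ t : ℝ} (hθ : 0 < θ) (ht : 0 < t) (q : ℝ × Polynomial ℝ) :
    Chain (2 * θ) (kchain θ t q) := by
  refine ⟨fun n u => ?_, fun n => ?_⟩
  · unfold kchain
    rw [Function.iterate_succ_apply']
    exact kfun_hasDeriv ht _ u
  · unfold kchain kfun
    obtain ⟨C, hC⟩ := gfun_bound hθ ht
    obtain ⟨D, hD⟩ := poly_gauss_bound ht (2 * θ) ((kstep θ t)^[n] q).2
    refine ⟨|((kstep θ t)^[n] q).1| * C + D, fun u => ?_⟩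
    rw [add_mul]
    refine (abs_add_le _ _).trans (add_le_add ?_ (hD u))
    rw [abs_mul, mul_assoc]
    exact mul_le_mul_of_nonneg_left (hC u) (abs_nonneg _)

lemma ind_bdd {f : ℝ → ℝ} (hc : ContinuousOn f (Ioi 0)) {a : ℝ}
    (h0 : Tendsto f (𝓝[>] 0) (𝓝 a)) (h1 : Tendsto f atTop (𝓝 0)) :
    ∃ M, ∀ z, |(Ioi (0:ℝ)).indicator f z| ≤ M := by
  have e0 : ∀ᶠ x in 𝓝[>] (0:ℝ), |f x| < |a| + 1 :=
    h0.abs.eventually (gt_mem_nhds (by linarith))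
  have e1 : ∀ᶠ x in atTop, |f x| < 1 := by
    have := h1.abs
    rw [abs_zero] at this
    exact this.eventually (gt_mem_nhds one_pos)
  obtain ⟨δ, hδ, h0'⟩ := mem_nhdsGT_iff_exists_Ioo_subset.1 e0
  obtain ⟨R, hR⟩ := eventually_atTop.1 e1
  have hδ' : (0:ℝ) < δ := hδ
  obtain ⟨C, hC⟩ := isCompact_Icc.exists_bound_of_continuousOn
    (hc.mono (fun x (hx : x ∈ Icc δ R) => lt_of_lt_of_le hδ' hx.1))
  refine ⟨max (|a| + 1) C, fun z => ?_⟩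
  by_cases hz : z ∈ Ioi (0:ℝ)
  · rw [indicator_of_mem hz]
    by_cases hzδ : z < δ
    · exact (le_of_lt (h0' ⟨hz, hzδ⟩)).trans (le_max_left _ _)
    · by_cases hzR : R ≤ z
      · have := hR z hzR
        have := abs_nonneg a
        exact le_trans (by linarith) (le_max_left _ _)
      · exact (hC z ⟨not_lt.1 hzδ, (not_le.1 hzR).le⟩).trans (le_max_right _ _)
  · rw [indicator_of_notMem hz, abs_zero]
    exact le_trans (by positivity) (le_max_left _ _)

/-- For `f ∈ 𝒮`, the function `(P_t f)'·1_{(0,∞)}` belongs to `𝒮`: `(P_t f)'` is C² on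
`(0,∞)`, the one-sided limits at `0⁺` of `(P_t f)'`, `(P_t f)''` and `(P_t f)'''` exist and
are finite, and `lim_{x→∞} (P_t f)'(x) = 0`. -/
theorem Pt_deriv_mem_S (θ t : ℝ) (hθ : 0 < θ) (ht : 0 < t)
    (f : ℝ → ℝ) (hf : memS f) :
    ContDiffOn ℝ 2 (deriv (Pt θ t f)) (Set.Ioi 0) ∧
    (∃ a : ℝ, Filter.Tendsto (deriv (Pt θ t f)) (nhdsWithin 0 (Set.Ioi 0)) (nhds a)) ∧
    (∃ b : ℝ, Filter.Tendsto (deriv (deriv (Pt θ t f))) (nhdsWithin 0 (Set.Ioi 0)) (nhds b)) ∧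
    (∃ c : ℝ,
      Filter.Tendsto (deriv (deriv (deriv (Pt θ t f)))) (nhdsWithin 0 (Set.Ioi 0)) (nhds c)) ∧
    Filter.Tendsto (deriv (Pt θ t f)) Filter.atTop (nhds 0) := by
  obtain ⟨hC2, ⟨a, ha⟩, -, -, hinf⟩ := hf
  set h : ℝ → ℝ := (Ioi (0:ℝ)).indicator f with hh
  set h' : ℝ → ℝ := fun z => h (-z) with hh'
  obtain ⟨M, hM⟩ := ind_bdd hC2.continuousOn ha hinf
  have mh : Measurable h := by
    classical
    rw [hh, ← piecewise_eq_indicator]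
    exact hC2.continuousOn.measurable_piecewise continuous_zero.continuousOn measurableSet_Ioi
  have mh' : Measurable h' := mh.comp measurable_neg
  have hM' : ∀ z, |h' z| ≤ M := fun z => hM (-z)
  have th : Tendsto h atTop (𝓝 0) := by
    refine hinf.congr' ?_
    filter_upwards [eventually_gt_atTop (0:ℝ)] with x hx
    exact (indicator_of_mem (show x ∈ Ioi (0:ℝ) from hx) f).symm
  have th' : Tendsto h' atTop (𝓝 0) := by
    refine tendsto_const_nhds.congr' ?_
    filter_upwards [eventually_gt_atTop (0:ℝ)] with x hx
    refine (indicator_of_notMem ?_ f).symm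
    simp only [mem_Ioi]
    linarith
  have hc : 0 < 2 * θ := by positivity
  set κ : ℝ := (Real.sqrt (2 * Real.pi * t))⁻¹ with hκ
  set A := kchain θ t (0, Polynomial.C κ) with hA
  set B := kchain θ t (2, Polynomial.C (-κ)) with hB
  set G := kchain θ t (1, 0) with hG
  have cA : Chain (2 * θ) A := kchain_chain hθ ht _
  have cB : Chain (2 * θ) B := kchain_chain hθ ht _
  have cG : Chain (2 * θ) G := kchain_chain hθ ht _
  have key : ∀ (K : ℕ → ℝ → ℝ), Chain (2 * θ) K → ∀ (H : ℝ → ℝ), Measurable H →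
      (∀ z, |H z| ≤ M) → ∀ n x, Integrable (fun z => K n (x - z) * H z) ∧
      HasDerivAt (fun x => ∫ z, K n (x - z) * H z) (∫ z, K (n + 1) (x - z) * H z) x := by
    intro K cK H mH bH n x
    obtain ⟨C, hC⟩ := cK.2 n
    obtain ⟨C', hC'⟩ := cK.2 (n + 1)
    exact conv_deriv hc (cK.1 n) (cK.cont (n + 1)) hC hC' mH bH x
  let F : ℕ → ℝ → ℝ := fun n x => (∫ z, A n (x - z) * h z) + (∫ z, B n (x - z) * h' z)
    + (1 / θ * f 0) * G n x
  have dF : ∀ n x, HasDerivAt (F n) (F (n + 1) x) x := fun n x =>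
    (((key A cA h mh hM n x).2).add ((key B cB h' mh' hM' n x).2)).add
      ((cG.1 n x).const_mul _)
  have eF : Pt θ t f = F 0 := by
    funext x
    have i1 := (key A cA h mh hM 0 x).1
    have i2 := (key B cB h' mh' hM' 0 x).1
    have e2 : ∫ z, B 0 (x - z) * h' z = ∫ y, B 0 (x + y) * h y := by
      rw [← integral_neg_eq_self]
      simp [hh']
    have i2' : Integrable (fun y => B 0 (x + y) * h y) := by
      have := i2.comp_neg
      simpa [hh'] using this
    simp only [F, Pt]
    rw [e2, ← integral_add i1 i2', ← integral_indicator measurableSet_Ioi]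
    congr 1
    · congr 1
      funext y
      by_cases hy : y ∈ Ioi (0:ℝ)
      · rw [indicator_of_mem hy, hh, indicator_of_mem hy]
        simp only [hA, hB, kchain, kfun, Function.iterate_zero, id, pker, Polynomial.eval_C]
        rw [show (y - x) ^ 2 = (x - y) ^ 2 by ring, show (-y - x) ^ 2 = (x + y) ^ 2 by ring]
        ring
      · rw [indicator_of_notMem hy, hh, indicator_of_notMem hy]
        simp
    · simp only [hG, kchain, kfun, Function.iterate_zero, id, Polynomial.eval_zero]
      ring
  have dd : ∀ n, deriv (F n) = F (n + 1) := fun n => funext fun x => (dF n x).deriv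
  have ddf : ∀ n, Differentiable ℝ (F n) := fun n x => (dF n x).differentiableAt
  have lim : ∀ n, ∃ a, Tendsto (F n) (𝓝[>] 0) (𝓝 a) := fun n =>
    ⟨F n 0, ((ddf n).continuous.tendsto 0).mono_left nhdsWithin_le_nhds⟩
  rw [eF, dd 0, dd 1, dd 2]
  refine ⟨ContDiff.contDiffOn ?_, lim 1, lim 2, lim 3, ?_⟩
  · rw [show (2 : WithTop ℕ∞) = 1 + 1 by norm_num, contDiff_succ_iff_deriv, dd 1,
      contDiff_one_iff_deriv, dd 2]
    exact ⟨ddf 1, by simp, ddf 2, (ddf 3).continuous⟩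
  · obtain ⟨C, hC⟩ := cA.2 1
    obtain ⟨D, hD⟩ := cB.2 1
    obtain ⟨E, hE⟩ := cG.2 1
    have t1 := conv_tendsto hc (cA.cont 1) hC mh hM th
    have t2 := conv_tendsto hc (cB.cont 1) hD mh' hM' th'
    have t3 : Tendsto (G 1) atTop (𝓝 0) := by
      refine squeeze_zero_norm hE ?_
      have : Tendsto (fun u : ℝ => Real.exp (-(2 * θ) * |u|)) atTop (𝓝 0) :=
        Real.tendsto_exp_atBot.comp
          (tendsto_abs_atTop_atTop.const_mul_atTop_of_neg (by linarith))
      simpa using this.const_mul E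
    simpa [F] using (t1.add t2).add (t3.const_mul (1 / θ * f 0))
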